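/- Let n, d, k be integers with d ≥ 3 and 1 ≤ k ≤ n, and set p' := p/(2−p). Then E[∫ f_{S_−(X)} dμ_k] = p'·p^{−1}·2^k·E[∫ f_{S_−(X)} dVol], where Vol is the normalized counting measure on [2^n]^d (so Vol([2^n]^d) = 1). -/

import Mathlib

open MeasureTheory Finset

noncomputable section

/-- Points of the grid `[2^n]^d` (coordinates taken 0-based). -/
abbrev GridPt (n d : ℕ) := Fin d → Fin (2^n)

/-- Normalized counting "volume" of a subset of the grid: `Vol(A) = 2^{-nd}|A|`. -/
def Vol (n d : ℕ) (A : Finset (GridPt n d)) : ℝ := (A.card : ℝ) / 2^(n*d)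

/-- The ℓ1 metric on the grid. -/
def gdist {n d : ℕ} (u v : GridPt n d) : ℝ := ∑ i, |((u i : ℕ) : ℝ) - ((v i : ℕ) : ℝ)|

/-- Indices of the dyadic cubes in `D_k`. -/
abbrev CubeIdx (d k : ℕ) := Fin d → Fin (2^k)

/-- The dyadic cube of side-cardinality `2^(n-k)` indexed by `j ∈ {0,…,2^k-1}^d`. -/
def cube (n d k : ℕ) (j : CubeIdx d k) : Finset (GridPt n d) :=
  Finset.univ.filter (fun x => ∀ i, (x i : ℕ) / 2^(n-k) = (j i : ℕ))

/-- `p = 2^{-4d}`. -/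
def pp (d : ℕ) : ℝ := ((2:ℝ)^(4*d))⁻¹

/-- The law of each `X_Q`: takes values `±1` with probability `p/2` each
and `0` with probability `1-p`. -/
def stepMeasure (d : ℕ) : Measure ℝ :=
  (Real.toNNReal (pp d / 2)) • Measure.dirac (1:ℝ)
  + (Real.toNNReal (pp d / 2)) • Measure.dirac (-1:ℝ)
  + (Real.toNNReal (1 - pp d)) • Measure.dirac (0:ℝ)

instance (d : ℕ) : IsFiniteMeasure (stepMeasure d) := by
  unfold stepMeasure; infer_instance

/-- The joint law of the i.i.d. family `{X_Q}_{Q ∈ D_k}`; a sample point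
`ω : CubeIdx d k → ℝ` records the values `X_Q = ω Q`. -/
def prodMeasure (d k : ℕ) : Measure (CubeIdx d k → ℝ) :=
  Measure.pi fun _ => stepMeasure d

/-- `μ_k(A) = ∑_{Q ∈ D_k} p⁻¹ 2^k X_Q Vol(A ∩ Q)`, as a function of the sample point `ω`. -/
def muMeas (n d k : ℕ) (A : Finset (GridPt n d)) (ω : CubeIdx d k → ℝ) : ℝ :=
  ∑ j : CubeIdx d k, (pp d)⁻¹ * 2^k * ω j * Vol n d (A ∩ cube n d k j)

/-- The function `f_S(z) = min{dist(z, ∪_{Q∈S} Q), d·2^n}`, with `f_∅ ≡ d·2^n`. -/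
def fS (n d k : ℕ) (S : Finset (CubeIdx d k)) (z : GridPt n d) : ℝ :=
  if h : (S.biUnion (cube n d k)).Nonempty
  then min ((S.biUnion (cube n d k)).inf' h (fun w => gdist z w)) ((d:ℝ) * 2^n)
  else (d:ℝ) * 2^n

/-- The random subset `S₋(X) = {Q ∈ D_k : X_Q = -1}`. -/
def Sminus (d k : ℕ) (ω : CubeIdx d k → ℝ) : Finset (CubeIdx d k) :=
  Finset.univ.filter (fun j => ω j = -1)

/-- `∫ f dVol`, where `Vol` is the normalized counting measure on the grid. -/
def intVol (n d : ℕ) (f : GridPt n d → ℝ) : ℝ := (∑ x, f x) / 2^(n*d)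

/-- `∫ f dμ_k`, as a function of the sample point `ω`. -/
def intMu (n d k : ℕ) (f : GridPt n d → ℝ) (ω : CubeIdx d k → ℝ) : ℝ :=
  ∑ x, f x * muMeas n d k {x} ω

/-! Split `E[∫ f_{S₋(X)} dμ_k]` according to the grid point `x`, and let `Q` be the cube of `x`.
Since `f_S` vanishes on the cubes of `S`, the value `f_{S₋(X)}(x)` is zero when `X_Q = -1`, and
otherwise it equals `f_{S₋(X) \ {Q}}(x)`, which is independent of `X_Q`. With
`A = E[f_{S₋(X) \ {Q}}(x)]` this gives
`E[f_{S₋(X)}(x) X_Q] = A · E[X_Q; X_Q ≠ -1] = A · p/2` and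
`E[f_{S₋(X)}(x)] = A · P(X_Q ≠ -1) = A · (2 - p)/2`, whose ratio is `p' = p/(2-p)`. -/

lemma integrable_of_ae_mem_finite {α E : Type*} [MeasurableSpace α] [MeasurableSingletonClass α]
    [NormedAddCommGroup E] {μ : Measure α} [IsFiniteMeasure μ] {s : Set α} (hs : s.Finite)
    (h : ∀ᵐ a ∂μ, a ∈ s) (f : α → E) : Integrable f μ := by
  rw [← Measure.restrict_eq_self_of_ae_mem h]
  exact IntegrableOn.of_finite hs

lemma integral_mul_eval_of_dependsOn {ι 𝕜 : Type*} [Fintype ι] [RCLike 𝕜] {α : ι → Type*}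
    [∀ j, MeasurableSpace (α j)] (μ : ∀ j, Measure (α j)) [∀ j, IsProbabilityMeasure (μ j)]
    {i : ι} {f : (∀ j, α j) → 𝕜} (hf : DependsOn f {i}ᶜ) (g : α i → 𝕜) :
    ∫ ω, f ω * g (ω i) ∂Measure.pi μ = (∫ ω, f ω ∂Measure.pi μ) * ∫ t, g t ∂μ i := by
  classical
  obtain ⟨F, hF⟩ : ∃ F : (∀ j : {j // ¬j = i}, α j) → 𝕜, ∀ ω, f ω = F fun j => ω j :=
    have ⟨F, hF⟩ := dependsOn_iff_exists_comp.1 hf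
    ⟨F, congrFun hF⟩
  have hsplit : MeasurePreserving (MeasurableEquiv.piEquivPiSubtypeProd α (· = i)) (Measure.pi μ)
      ((Measure.pi fun j : {j // j = i} => μ j).prod
        (Measure.pi fun j : {j // ¬j = i} => μ j)) := by
    convert measurePreserving_piEquivPiSubtypeProd μ (· = i)
  have heval := measurePreserving_piUnique fun j : {j // j = i} => μ j
  have hfactor (h : α i → 𝕜) : ∫ ω, f ω * h (ω i) ∂Measure.pi μ
      = (∫ t, h t ∂μ i) * ∫ v, F v ∂Measure.pi fun j : {j // ¬j = i} => μ j := by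
    calc ∫ ω, f ω * h (ω i) ∂Measure.pi μ
        = ∫ ω, h (ω i) * F (fun j => ω j) ∂Measure.pi μ := by simp only [hF, mul_comm]
      _ = ∫ z, h (z.1 default) * F z.2 ∂(Measure.pi fun j : {j // j = i} => μ j).prod
            (Measure.pi fun j : {j // ¬j = i} => μ j) :=
          hsplit.integral_comp' fun z => h (z.1 default) * F z.2
      _ = (∫ u, h (u default) ∂Measure.pi fun j : {j // j = i} => μ j)
            * ∫ v, F v ∂Measure.pi fun j : {j // ¬j = i} => μ j :=
          integral_prod_mul (fun u : ∀ j : {j // j = i}, α j => h (u default)) F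
      _ = _ := congrArg (· * _) (heval.integral_comp' h)
  have hmean : ∫ ω, f ω ∂Measure.pi μ = ∫ v, F v ∂Measure.pi fun j : {j // ¬j = i} => μ j := by
    simpa using hfactor fun _ => 1
  rw [hfactor, hmean, mul_comm]

lemma pp_pos (d : ℕ) : 0 < pp d := by
  unfold pp
  positivity

lemma pp_le_one (d : ℕ) : pp d ≤ 1 :=
  inv_le_one_of_one_le₀ (one_le_pow₀ one_le_two)

lemma integral_stepMeasure (d : ℕ) (g : ℝ → ℝ) :
    ∫ t, g t ∂stepMeasure d = pp d / 2 * g 1 + pp d / 2 * g (-1) + (1 - pp d) * g 0 := by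
  have hint (c : NNReal) (a : ℝ) : Integrable g (c • Measure.dirac a) :=
    (integrable_dirac (by simp)).smul_measure_nnreal
  have hp : 0 ≤ pp d / 2 := by linarith [pp_pos d]
  have hq : 0 ≤ 1 - pp d := by linarith [pp_le_one d]
  unfold stepMeasure
  rw [integral_add_measure ((hint _ _).add_measure (hint _ _)) (hint _ _),
    integral_add_measure (hint _ _) (hint _ _)]
  simp only [integral_smul_nnreal_measure, integral_dirac, NNReal.smul_def, smul_eq_mul,
    Real.coe_toNNReal _ hp, Real.coe_toNNReal _ hq]

instance (d : ℕ) : IsProbabilityMeasure (stepMeasure d) := by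
  have hmass := integral_stepMeasure d fun _ => 1
  rw [integral_const, smul_eq_mul, mul_one] at hmass
  exact isProbabilityMeasure_iff_real.2 (by linarith)

lemma ae_stepMeasure_mem (d : ℕ) : ∀ᵐ t ∂stepMeasure d, t ∈ ({1, -1, 0} : Set ℝ) := by
  simp [stepMeasure, ae_add_measure_iff, Measure.ae_smul_measure]

lemma integrable_prodMeasure {E : Type*} [NormedAddCommGroup E] {d k : ℕ}
    (f : (CubeIdx d k → ℝ) → E) : Integrable f (prodMeasure d k) :=
  haveI : IsFiniteMeasure (prodMeasure d k) := by unfold prodMeasure; infer_instance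
  integrable_of_ae_mem_finite (.pi' fun _ => Set.toFinite {1, -1, 0})
    (Filter.eventually_all.2 fun _ => Measure.tendsto_eval_ae_ae.eventually (ae_stepMeasure_mem d))
    f

lemma dependsOn_Sminus_erase {d k : ℕ} (j : CubeIdx d k) :
    DependsOn (fun ω => (Sminus d k ω).erase j) {j}ᶜ := by
  intro ω ω' h
  ext i
  simp only [Sminus, mem_erase, mem_filter, mem_univ, true_and]
  exact and_congr_right fun hi => by rw [h i hi]

section VanishingOnMem

variable {d k : ℕ} {c : Finset (CubeIdx d k) → ℝ} {j : CubeIdx d k}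

lemma integral_comp_Sminus_mul_eval (hc : ∀ S, j ∈ S → c S = 0) (g : ℝ → ℝ) :
    ∫ ω, c (Sminus d k ω) * g (ω j) ∂prodMeasure d k
      = (∫ ω, c ((Sminus d k ω).erase j) ∂prodMeasure d k)
        * (pp d / 2 * g 1 + (1 - pp d) * g 0) := by
  have hsplit (ω : CubeIdx d k → ℝ) : c (Sminus d k ω) * g (ω j)
      = c ((Sminus d k ω).erase j) * ({-1}ᶜ : Set ℝ).indicator g (ω j) := by
    by_cases hω : ω j = -1
    · rw [hc _ (by simp [Sminus, hω])]
      simp [hω]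
    · rw [erase_eq_of_notMem (by simp [Sminus, hω]), Set.indicator_of_mem (by simp [hω])]
  have hindep : DependsOn (fun ω => c ((Sminus d k ω).erase j)) {j}ᶜ :=
    fun _ _ h => congrArg c (dependsOn_Sminus_erase j h)
  have hstep : ∫ t, ({-1}ᶜ : Set ℝ).indicator g t ∂stepMeasure d
      = pp d / 2 * g 1 + (1 - pp d) * g 0 := by
    rw [integral_stepMeasure]
    norm_num [Set.indicator]
  simp_rw [hsplit]
  rw [← hstep]
  exact integral_mul_eval_of_dependsOn _ hindep _

lemma integral_comp_Sminus_mul_apply (hc : ∀ S, j ∈ S → c S = 0) :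
    ∫ ω, c (Sminus d k ω) * ω j ∂prodMeasure d k
      = pp d / (2 - pp d) * ∫ ω, c (Sminus d k ω) ∂prodMeasure d k := by
  have hX := integral_comp_Sminus_mul_eval hc fun t => t
  have hone := integral_comp_Sminus_mul_eval hc fun _ => 1
  simp only [mul_one] at hone
  have hne : 2 - pp d ≠ 0 := by linarith [pp_le_one d]
  rw [hX, hone]
  field_simp
  ring

end VanishingOnMem

/-- The index of the cube of `D_k` containing the grid point `x`. -/
def cubeIdx {n d k : ℕ} (hkn : k ≤ n) (x : GridPt n d) : CubeIdx d k := fun i =>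
  ⟨x i / 2 ^ (n - k), by
    rw [Nat.div_lt_iff_lt_mul (by positivity), ← pow_add, Nat.add_sub_cancel' hkn]
    exact (x i).2⟩

lemma mem_cube_iff {n d k : ℕ} (hkn : k ≤ n) {x : GridPt n d} {j : CubeIdx d k} :
    x ∈ cube n d k j ↔ cubeIdx hkn x = j := by
  simp [cube, cubeIdx, funext_iff, Fin.ext_iff]

lemma muMeas_singleton {n d k : ℕ} (hkn : k ≤ n) (x : GridPt n d) (ω : CubeIdx d k → ℝ) :
    muMeas n d k {x} ω = (pp d)⁻¹ * 2 ^ k * ω (cubeIdx hkn x) / 2 ^ (n * d) := by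
  have hVol (j : CubeIdx d k) :
      Vol n d ({x} ∩ cube n d k j) = if cubeIdx hkn x = j then 1 / 2 ^ (n * d) else 0 := by
    simp only [Vol, singleton_inter, mem_cube_iff hkn]
    split_ifs <;> simp
  simp [muMeas, hVol, div_eq_mul_inv]

lemma intMu_eq_intVol {n d k : ℕ} (hkn : k ≤ n) (f : GridPt n d → ℝ) (ω : CubeIdx d k → ℝ) :
    intMu n d k f ω = (pp d)⁻¹ * 2 ^ k * intVol n d fun x => f x * ω (cubeIdx hkn x) := by
  simp only [intMu, intVol, muMeas_singleton hkn, mul_sum, sum_div]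
  exact sum_congr rfl fun x _ => by ring

lemma intVol_const_mul {n d : ℕ} (a : ℝ) (f : GridPt n d → ℝ) :
    intVol n d (fun x => a * f x) = a * intVol n d f := by
  rw [intVol, intVol, ← mul_sum, mul_div_assoc]

lemma integral_intVol {Ω : Type*} [MeasurableSpace Ω] {P : Measure Ω} {n d : ℕ}
    {F : Ω → GridPt n d → ℝ} (hF : ∀ x, Integrable (F · x) P) :
    ∫ ω, intVol n d (F ω) ∂P = intVol n d fun x => ∫ ω, F ω x ∂P := by
  simp only [intVol, integral_div, integral_finsetSum _ fun x _ => hF x]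

lemma gdist_self {n d : ℕ} (z : GridPt n d) : gdist z z = 0 := by
  simp [gdist]

lemma gdist_nonneg {n d : ℕ} (z w : GridPt n d) : 0 ≤ gdist z w :=
  sum_nonneg fun _ _ => abs_nonneg _

lemma fS_eq_zero_of_mem_cube {n d k : ℕ} {S : Finset (CubeIdx d k)} {j : CubeIdx d k}
    {z : GridPt n d} (hj : j ∈ S) (hz : z ∈ cube n d k j) : fS n d k S z = 0 := by
  have hmem : z ∈ S.biUnion (cube n d k) := mem_biUnion.2 ⟨j, hj, hz⟩
  have hdist : (S.biUnion (cube n d k)).inf' ⟨z, hmem⟩ (gdist z) = 0 :=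
    le_antisymm ((inf'_le _ hmem).trans_eq (gdist_self z)) (le_inf' _ _ fun w _ => gdist_nonneg z w)
  rw [fS, dif_pos ⟨z, hmem⟩, hdist]
  exact min_eq_left (by positivity)

theorem expected_intMu_eq_general {n d k : ℕ} (hkn : k ≤ n)
    {f : Finset (CubeIdx d k) → GridPt n d → ℝ}
    (hf : ∀ S, ∀ j ∈ S, ∀ z ∈ cube n d k j, f S z = 0) :
    ∫ ω, intMu n d k (f (Sminus d k ω)) ω ∂(prodMeasure d k)
      = (pp d / (2 - pp d)) * (pp d)⁻¹ * 2^k *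
          ∫ ω, intVol n d (f (Sminus d k ω)) ∂(prodMeasure d k) := by
  have hpoint (x : GridPt n d) :
      ∫ ω, f (Sminus d k ω) x * ω (cubeIdx hkn x) ∂prodMeasure d k
        = pp d / (2 - pp d) * ∫ ω, f (Sminus d k ω) x ∂prodMeasure d k :=
    integral_comp_Sminus_mul_apply (c := (f · x)) fun S hS =>
      hf S _ hS x ((mem_cube_iff hkn).2 rfl)
  simp_rw [intMu_eq_intVol hkn, integral_const_mul]
  rw [integral_intVol fun _ => integrable_prodMeasure _,
    integral_intVol fun _ => integrable_prodMeasure _]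
  simp_rw [hpoint, intVol_const_mul]
  ring

/-- `E[∫ f_{S₋(X)} dμ_k] = p'·p⁻¹·2^k·E[∫ f_{S₋(X)} dVol]`, where `p' = p/(2-p)`. -/
theorem expected_intMu_eq (n d k : ℕ) (hd : 3 ≤ d) (hk : 1 ≤ k) (hkn : k ≤ n) :
    ∫ ω, intMu n d k (fS n d k (Sminus d k ω)) ω ∂(prodMeasure d k)
      = (pp d / (2 - pp d)) * (pp d)⁻¹ * 2^k *
          ∫ ω, intVol n d (fS n d k (Sminus d k ω)) ∂(prodMeasure d k) :=
  expected_intMu_eq_general hkn fun _ _ hj _ hz => fS_eq_zero_of_mem_cube hj hz
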